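/- arXiv:2210.10939 — 2 statements merged into one kernel-verified Lean document; each statement's English description precedes it below -/
import Mathlib

section
/- Suppose the family F(x,t), with F_0 = ∏_ν f_ν^{n_ν} and each f_ν = ∏_{ℓ=1}^{d_ν} (x − a_{νℓ}) with all a_{νℓ} pairwise distinct, satisfies (α_ν, δ_{ν,n(ν)})-Zd for each f_ν with n_ν > 1. Then there exists a nonzero constant c ∈ k such that ver(F) = c · ∏_ν res(f_ν, δ_{ν,n(ν)}^{n_ν−1}) · ∏_ν ∏_{ν'≠ν} res(f_ν, f_{ν'})^{n_{ν'}} / ∏_ν res(f_ν, α_ν^{n_ν−1}) (the factors involving δ and α being 1 whenever n_ν = 1). -/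
open Finset Polynomial

noncomputable section

/-- The limit of a Hahn (Puiseux) series as `t → 0`: the coefficient of the lowest
power of `t` occurring in it (its leading coefficient). -/
def lim0 {L : Type*} [Field L] (f : HahnSeries ℚ L) : L := f.coeff f.order

/-- `s` is a Puiseux series with nonnegative support and constant term `a`
(i.e. `s(0) = a`). -/
def HasConst {L : Type*} [Field L] (s : HahnSeries ℚ L) (a : L) : Prop :=
  s.coeff 0 = a ∧ ∀ q < (0 : ℚ), s.coeff q = 0

/-- The natural ring map `A[[t]] → L((t^ℚ))` induced by `φ : A →+* L`. -/
def Phi {A L : Type*} [CommRing A] [Field L] (φ : A →+* L) :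
    PowerSeries A →+* HahnSeries ℚ L :=
  (HahnSeries.ofPowerSeries ℚ L).comp (PowerSeries.map φ)

/-- The polynomial with power-series coefficients determined by a family
`F(x,t) = Σ_i p_i(x) t^i` of polynomials of degree at most `n'`. -/
def fam {A : Type*} [CommRing A] (n' : ℕ) (p : ℕ → Polynomial A) :
    Polynomial (PowerSeries A) :=
  ∑ j ∈ Finset.range (n' + 1), Polynomial.C (PowerSeries.mk fun i => (p i).coeff j) * X ^ j

/-- `∏_{q ≠ q'} (S q − S q')`, the product of the differences of all (ordered) pairs of
distinct `t`-roots.  For a monic family it equals `(-1)^(N(N-1)/2)` times the discriminant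
`Δ_{A[[t]]}(F) = ∏_{q<q'} (S q − S q')²`; in particular it is nonzero iff
`Δ_{A[[t]]}(F) ≠ 0`. -/
def rootsSep {L : Type*} [Field L] {ι : Type*} [Fintype ι] [DecidableEq ι]
    (S : ι → HahnSeries ℚ L) : HahnSeries ℚ L :=
  ∏ q ∈ Finset.univ.offDiag, (S q.1 - S q.2)

/-- `Δ(F, f_ν)(a ν ℓ, t)_0`: the limit of the generalized formal discriminant of the family
with respect to `f_ν = ∏_ℓ (x − a ν ℓ)`, evaluated at `x = a ν ℓ`.  Here the `t`-roots
approaching the roots of `f_ν` are grouped as `s ν · i` for `i` in `Fin (n ν)`; following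
Definition 2.3, `s'_i(x) = f_ν(x) − ∏_ℓ (x − s ν ℓ i)`, so that
`s'_i(x) − s'_j(x) = ∏_ℓ (x − s ν ℓ j) − ∏_ℓ (x − s ν ℓ i)`, and
`Δ(F,f_ν)(x,t) = [∏_{others} (x − s_ℓ)]^(2 n ν − 2) ∏_{i<j} (s'_i − s'_j)²`. -/
def gdlim {L : Type*} [Field L] {m : ℕ} (d n : Fin m → ℕ)
    (a : (ν : Fin m) → Fin (d ν) → L)
    (s : (ν : Fin m) → (ℓ : Fin (d ν)) → Fin (n ν) → HahnSeries ℚ L)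
    (ν : Fin m) (ℓ : Fin (d ν)) : L :=
  lim0 ((∏ ν' ∈ Finset.univ.erase ν, ∏ ℓ', ∏ i', (HahnSeries.C (a ν ℓ) - s ν' ℓ' i')) ^
      (2 * n ν - 2) *
    ∏ q ∈ Finset.univ.filter (fun q : Fin (n ν) × Fin (n ν) => q.1 < q.2),
      ((∏ ℓ', (HahnSeries.C (a ν ℓ) - s ν ℓ' q.2)) -
        ∏ ℓ', (HahnSeries.C (a ν ℓ) - s ν ℓ' q.1)) ^ 2)

/-- The discriminant `Δ(f) = ∏_{ℓ<ℓ'} (a ℓ − a ℓ')²` of a monic split polynomial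
`f = ∏_ℓ (x − a ℓ)`. -/
def discOf {L : Type*} [Field L] {d : ℕ} (a : Fin d → L) : L :=
  ∏ q ∈ Finset.univ.filter (fun q : Fin d × Fin d => q.1 < q.2), (a q.1 - a q.2) ^ 2

/-- The vertex `ver(F)` of the family (Definition 3.1), computed from the root data:
`ver(F) = ∏_{ν,ℓ} Δ(F,f_ν)(a_{νℓ},t)_0 · ∏_{ν<ν'} res(f_ν,f_{ν'})^(2(n_ν+n_{ν'}−n_ν n_{ν'}))`,
where `res(f_ν, f_{ν'}) = ∏_{ℓ,ℓ'} (a ν ℓ − a ν' ℓ')`. -/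
def ver {L : Type*} [Field L] {m : ℕ} (d n : Fin m → ℕ)
    (a : (ν : Fin m) → Fin (d ν) → L)
    (s : (ν : Fin m) → (ℓ : Fin (d ν)) → Fin (n ν) → HahnSeries ℚ L) : L :=
  (∏ ν, ∏ ℓ, gdlim d n a s ν ℓ) *
    ∏ ν, ∏ ν' ∈ Finset.Ioi ν,
      (∏ ℓ, ∏ ℓ', (a ν ℓ - a ν' ℓ')) ^
        (2 * ((n ν : ℤ) + (n ν' : ℤ) - (n ν : ℤ) * (n ν' : ℤ)))

/-- `f = c t^q + higher order terms`. -/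
def Lead {L : Type*} [Field L] (f : HahnSeries ℚ L) (q : ℚ) (c : L) : Prop :=
  f.coeff q = c ∧ ∀ r < q, f.coeff r = 0

section LeadCalc
variable {L : Type*} [Field L] {f g : HahnSeries ℚ L} {q r : ℚ} {c e : L}

lemma Lead.add (hf : Lead f q c) (hg : Lead g q e) : Lead (f + g) q (c + e) :=
  ⟨by simp [hf.1, hg.1], fun s hs => by simp [hf.2 s hs, hg.2 s hs]⟩

lemma Lead.neg (hf : Lead f q c) : Lead (-f) q (-c) :=
  ⟨by simp [hf.1], fun s hs => by simp [hf.2 s hs]⟩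

lemma Lead.sub (hf : Lead f q c) (hg : Lead g q e) : Lead (f - g) q (c - e) := by
  rw [sub_eq_add_neg, sub_eq_add_neg]; exact hf.add hg.neg

lemma Lead.mul (hf : Lead f q c) (hg : Lead g r e) : Lead (f * g) (q + r) (c * e) := by
  constructor
  · rw [HahnSeries.coeff_mul]
    rw [Finset.sum_eq_single (q, r)]
    · simp [hf.1, hg.1]
    · rintro ⟨i, j⟩ hij hne
      obtain ⟨h1, h2, h3⟩ := Finset.mem_antidiagonal.1 hij
      simp only at h3
      rcases lt_trichotomy i q with h | h | h
      · simp [hf.2 i h]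
      · subst h
        exact absurd (by simp at h3; rw [h3]) hne
      · have : j < r := by linarith
        simp [hg.2 j this]
    · intro h
      by_contra h'
      apply h
      rw [Finset.mem_antidiagonal]
      exact ⟨left_ne_zero_of_mul h', right_ne_zero_of_mul h', rfl⟩
  · intro s hs
    rw [HahnSeries.coeff_mul]
    apply Finset.sum_eq_zero
    rintro ⟨i, j⟩ hij
    obtain ⟨h1, h2, h3⟩ := Finset.mem_antidiagonal.1 hij
    simp only at h3
    rcases lt_or_ge i q with h | h
    · simp [hf.2 i h]
    · have : j < r := by linarith
      simp [hg.2 j this]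

lemma Lead.single (q : ℚ) (c : L) : Lead (HahnSeries.single q c) q c :=
  ⟨by simp, fun s hs => HahnSeries.coeff_single_of_ne hs.ne⟩

lemma Lead.C (c : L) : Lead (HahnSeries.C c) 0 c := Lead.single 0 c

lemma Lead.one : Lead (1 : HahnSeries ℚ L) 0 1 := Lead.C 1

lemma Lead.zero (q : ℚ) : Lead (0 : HahnSeries ℚ L) q 0 := ⟨by simp, by simp⟩

lemma Lead.of_lt (hf : Lead f q c) (h : r < q) : Lead f r 0 :=
  ⟨hf.2 r h, fun s hs => hf.2 s (hs.trans h)⟩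

lemma Lead.sum {ι : Type*} (S : Finset ι) (F : ι → HahnSeries ℚ L) (q : ℚ) (c : ι → L)
    (h : ∀ i ∈ S, Lead (F i) q (c i)) : Lead (∑ i ∈ S, F i) q (∑ i ∈ S, c i) := by
  classical
  induction S using Finset.induction_on with
  | empty => simpa using Lead.zero q
  | insert a S ha ih =>
    rw [Finset.sum_insert ha, Finset.sum_insert ha]
    exact (h a (by simp)).add (ih fun i hi => h i (by simp [hi]))

lemma Lead.prod {ι : Type*} (S : Finset ι) (F : ι → HahnSeries ℚ L) (q : ι → ℚ) (c : ι → L)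
    (h : ∀ i ∈ S, Lead (F i) (q i) (c i)) :
    Lead (∏ i ∈ S, F i) (∑ i ∈ S, q i) (∏ i ∈ S, c i) := by
  classical
  induction S using Finset.induction_on with
  | empty => simpa using Lead.one
  | insert a S ha ih =>
    rw [Finset.prod_insert ha, Finset.prod_insert ha, Finset.sum_insert ha]
    exact (h a (by simp)).mul (ih fun i hi => h i (by simp [hi]))

lemma Lead.prod0 {ι : Type*} (S : Finset ι) (F : ι → HahnSeries ℚ L) (c : ι → L)
    (h : ∀ i ∈ S, Lead (F i) 0 (c i)) :
    Lead (∏ i ∈ S, F i) 0 (∏ i ∈ S, c i) := by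
  simpa using Lead.prod S F (fun _ => 0) c h

lemma Lead.pow (hf : Lead f q c) (n : ℕ) : Lead (f ^ n) (n * q) (c ^ n) := by
  simpa using Lead.prod (Finset.range n) (fun _ => f) (fun _ => q) (fun _ => c) (fun _ _ => hf)

lemma Lead.mul0 (hf : Lead f q c) (hg : Lead g 0 e) : Lead (f * g) q (c * e) := by
  simpa using hf.mul hg

lemma Lead.order_eq (hf : Lead f q c) (hc : c ≠ 0) : f.order = q := by
  apply le_antisymm
  · exact HahnSeries.order_le_of_coeff_ne_zero (by rw [hf.1]; exact hc)
  · by_contra h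
    push Not at h
    have h0 := hf.2 _ h
    rw [HahnSeries.coeff_order_eq_zero] at h0
    apply hc
    rw [← hf.1, h0]; simp

lemma Lead.lim0_eq (hf : Lead f q c) (hc : c ≠ 0) : lim0 f = c := by
  unfold lim0; rw [hf.order_eq hc, hf.1]

lemma Lead.uniq (hf : Lead f q c) (hf' : Lead f q e) : c = e := hf.1.symm.trans hf'.1

lemma lead_order (f : HahnSeries ℚ L) : Lead f f.order (f.coeff f.order) :=
  ⟨rfl, fun _ hs => HahnSeries.coeff_eq_zero_of_lt_order hs⟩

lemma lead_root {n : ℕ} (hn : 0 < n) (hf : Lead (f ^ n) q c) (hc : c ≠ 0) :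
    ∃ w, Lead f (q / n) w ∧ w ^ n = c := by
  have hf0 : f ≠ 0 := by
    rintro rfl
    apply hc
    rw [← hf.1, zero_pow hn.ne']; simp
  have h1 := lead_order f
  have h2 : f.coeff f.order ≠ 0 := by rwa [Ne, HahnSeries.coeff_order_eq_zero]
  have h3 := h1.pow n
  have h4 : q = n * f.order := by
    rw [← hf.order_eq hc, ← h3.order_eq (pow_ne_zero _ h2)]
  have h5 : q / n = f.order := by rw [h4]; field_simp
  refine ⟨f.coeff f.order, h5 ▸ h1, ?_⟩
  rw [← h4] at h3
  exact h3.uniq hf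

lemma lead_div (hg : Lead g 0 e) (he : e ≠ 0) (h : Lead (f * g) q c) : Lead f q (c / e) := by
  have key : ∀ r < q, f.coeff r = 0 := by
    intro r hr
    by_cases hf0 : f = 0
    · simp [hf0]
    apply HahnSeries.coeff_eq_zero_of_lt_order
    refine lt_of_lt_of_le hr ?_
    by_contra hlt
    push Not at hlt
    have h1 := ((lead_order f).mul0 hg).1
    rw [h.2 _ hlt] at h1
    have h2 : f.coeff f.order ≠ 0 := by rwa [Ne, HahnSeries.coeff_order_eq_zero]
    exact mul_ne_zero h2 he h1.symm
  have h1 : Lead f q (f.coeff q) := ⟨rfl, key⟩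
  have h2 := (h1.mul0 hg).uniq h
  rw [← h2, mul_div_cancel_right₀ _ he]
  exact h1

/-- differences of products -/
lemma lead_prod_sub {ι : Type*} (S : Finset ι) (F G : ι → HahnSeries ℚ L) (q : ℚ)
    (hF : ∀ i ∈ S, ∃ c, Lead (F i) 0 c) (hG : ∀ i ∈ S, ∃ c, Lead (G i) 0 c)
    (h : ∀ i ∈ S, ∃ c, Lead (F i - G i) q c) :
    ∃ c, Lead (∏ i ∈ S, F i - ∏ i ∈ S, G i) q c := by
  classical
  induction S using Finset.induction_on with
  | empty => exact ⟨0, by simpa using Lead.zero q⟩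
  | insert a S ha ih =>
    rw [Finset.prod_insert ha, Finset.prod_insert ha]
    obtain ⟨c1, h1⟩ := ih (fun i hi => hF i (by simp [hi])) (fun i hi => hG i (by simp [hi]))
      (fun i hi => h i (by simp [hi]))
    obtain ⟨c2, h2⟩ := h a (by simp)
    obtain ⟨c3, h3⟩ := hF a (by simp)
    have h4 : ∃ c, Lead (∏ i ∈ S, G i) 0 c := by
      choose! c hc using hG
      exact ⟨_, Lead.prod0 S G c fun i hi => hc i (by simp [hi])⟩
    obtain ⟨c4, h4⟩ := h4
    refine ⟨c1 * c3 + c2 * c4, ?_⟩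
    convert (h1.mul0 h3).add (h2.mul0 h4) using 1
    ring

end LeadCalc

section EvalCalc
variable {A L : Type*} [CommRing A] [Field L] (φ : A →+* L)

/-- evaluation of a polynomial at a Hahn series -/
def ev (x : HahnSeries ℚ L) : Polynomial A →+* HahnSeries ℚ L :=
  Polynomial.eval₂RingHom ((HahnSeries.C : L →+* HahnSeries ℚ L).comp φ) x

/-- the uniformizer -/
def tt (L : Type*) [Field L] : HahnSeries ℚ L := HahnSeries.single (1 : ℚ) (1 : L)

lemma lead_tt_pow (N : ℕ) : Lead (tt L ^ N) (N : ℚ) 1 := by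
  have := (Lead.single (1 : ℚ) (1 : L)).pow N
  rw [mul_one, one_pow] at this
  exact this

lemma ev_lead {x : HahnSeries ℚ L} {a : L} (hx : Lead x 0 a) (P : Polynomial A) :
    Lead (ev φ x P) 0 ((P.map φ).eval a) := by
  induction P using Polynomial.induction_on' with
  | add P Q hP hQ => simpa using hP.add hQ
  | monomial n c =>
    have := (Lead.C (φ c)).mul (hx.pow n)
    simpa [ev, Polynomial.eval_map] using this

lemma ev_sub {x y : HahnSeries ℚ L} {a : L} (hx : Lead x 0 a) (hy : Lead y 0 a)
    (P : Polynomial A) :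
    ∃ V, ev φ x P - ev φ y P = (x - y) * V ∧ Lead V 0 (((derivative P).map φ).eval a) := by
  induction P using Polynomial.induction_on with
  | C c => exact ⟨0, by simp [ev], by simpa using Lead.zero 0⟩
  | add P Q hP hQ =>
    obtain ⟨V, h1, h2⟩ := hP
    obtain ⟨W, h3, h4⟩ := hQ
    refine ⟨V + W, ?_, by simpa using h2.add h4⟩
    rw [map_add, map_add, mul_add, ← h1, ← h3]; ring
  | monomial n c ih =>
    obtain ⟨V, h1, h2⟩ := ih
    refine ⟨x * V + ev φ y (C c * X ^ n), ?_, ?_⟩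
    · rw [pow_succ, ← mul_assoc, map_mul (ev φ x), map_mul (ev φ y)]
      have e1 : ev φ x X = x := by simp [ev]
      have e2 : ev φ y X = y := by simp [ev]
      rw [e1, e2]
      linear_combination x * h1
    · have := (hx.mul0 h2).add (ev_lead φ hy (C c * X ^ n))
      convert this using 1
      rw [pow_succ, ← mul_assoc, derivative_mul]
      simp only [derivative_X, mul_one, Polynomial.map_add, Polynomial.map_mul, Polynomial.map_X,
        Polynomial.eval_add, Polynomial.eval_mul, Polynomial.eval_X]
      ring

/-- evaluation of the family -/
def Ev (n' : ℕ) (p : ℕ → Polynomial A) (x : HahnSeries ℚ L) : HahnSeries ℚ L :=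
  ((fam n' p).map (Phi φ)).eval x

lemma Phi_lead (f : PowerSeries A) : Lead (Phi φ f) 0 (φ (PowerSeries.coeff 0 f)) := by
  constructor
  · have := HahnSeries.ofPowerSeries_apply_coeff (Γ := ℚ) (PowerSeries.map φ f) 0
    simp only [Nat.cast_zero] at this
    simp only [Phi, RingHom.comp_apply]
    rw [this]; simp
  · intro r hr
    simp only [Phi, RingHom.comp_apply, HahnSeries.ofPowerSeries_apply]
    apply HahnSeries.embDomain_of_notMem_range
    rintro ⟨n, rfl⟩
    simp at hr
    linarith [(Nat.cast_nonneg n : (0:ℚ) ≤ n)]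

lemma Ev_eq (n' : ℕ) (p : ℕ → Polynomial A) (x : HahnSeries ℚ L) :
    Ev φ n' p x = ∑ j ∈ Finset.range (n' + 1),
      Phi φ (PowerSeries.mk fun i => (p i).coeff j) * x ^ j := by
  simp [Ev, fam, Polynomial.map_sum, Polynomial.eval_finsetSum]

lemma Ev_lead {x : HahnSeries ℚ L} {a : L} (hx : Lead x 0 a) (n' : ℕ) (p : ℕ → Polynomial A) :
    ∃ c, Lead (Ev φ n' p x) 0 c := by
  rw [Ev_eq]
  exact ⟨_, Lead.sum _ _ 0 _ fun j _ =>
    (Phi_lead φ _).mul0 (show Lead (x ^ j) 0 (a ^ j) by simpa using hx.pow j)⟩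

lemma Ev_step (n' : ℕ) (p : ℕ → Polynomial A) (hdeg : ∀ i, (p i).natDegree ≤ n')
    (x : HahnSeries ℚ L) :
    Ev φ n' p x = ev φ x (p 0) + tt L * Ev φ n' (fun i => p (i + 1)) x := by
  have h : ∀ j, (PowerSeries.mk fun i => (p i).coeff j) =
      PowerSeries.C ((p 0).coeff j) + PowerSeries.X * PowerSeries.mk fun i => (p (i+1)).coeff j := by
    intro j
    ext i
    cases i <;> simp [PowerSeries.coeff_succ_X_mul]
  have e : ev φ x (p 0) = ∑ j ∈ Finset.range (n' + 1),
      HahnSeries.C (φ ((p 0).coeff j)) * x ^ j := by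
    simp only [ev, Polynomial.coe_eval₂RingHom]
    rw [Polynomial.eval₂_eq_sum_range' _ (Nat.lt_succ_of_le (hdeg 0))]
    rfl
  rw [Ev_eq, Ev_eq, e, Finset.mul_sum, ← Finset.sum_add_distrib]
  refine Finset.sum_congr rfl fun j _ => ?_
  rw [h j, map_add, map_mul]
  have e1 : Phi φ (PowerSeries.C ((p 0).coeff j)) = HahnSeries.C (φ ((p 0).coeff j)) := by
    simp [Phi]
  have e2 : Phi φ (PowerSeries.X : PowerSeries A) = tt L := by
    simp [Phi, tt]
  rw [e1, e2]; ring

lemma Ev_expand {n' : ℕ} (x : HahnSeries ℚ L) (M : ℕ) : ∀ (p : ℕ → Polynomial A)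
    (_ : ∀ i, (p i).natDegree ≤ n'),
    Ev φ n' p x = ∑ i ∈ Finset.range M, ev φ x (p i) * tt L ^ i +
      tt L ^ M * Ev φ n' (fun i => p (i + M)) x := by
  induction M with
  | zero => intro p _; simp
  | succ M ih =>
    intro p hp
    rw [Ev_step φ n' p hp, ih (fun i => p (i + 1)) (fun i => hp _), Finset.sum_range_succ' _ M]
    simp only [mul_add, Finset.mul_sum, pow_zero, mul_one, pow_succ]
    have : (fun i => p (i + M + 1)) = (fun i => p (i + (M + 1))) := rfl
    rw [this]
    have : ∀ i, tt L * (ev φ x (p (i + 1)) * tt L ^ i) = ev φ x (p (i + 1)) * (tt L ^ i * tt L) := by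
      intro i; ring
    simp only [this]
    ring

lemma eval₂_expand {x : HahnSeries ℚ L} {a : L} (hx : Lead x 0 a)
    (Q : Polynomial (Polynomial A)) (M : ℕ) :
    ∃ R c, Lead R 0 c ∧ Q.eval₂ (ev φ x) (tt L) =
      ∑ i ∈ Finset.range M, ev φ x (Q.coeff i) * tt L ^ i + tt L ^ M * R := by
  refine ⟨∑ i ∈ Finset.range (Q.natDegree + 1), ev φ x (Q.coeff (M + i)) * tt L ^ i, 
    ∑ i ∈ Finset.range (Q.natDegree + 1), ((Q.coeff (M + i)).map φ).eval a *
      (if i = 0 then 1 else 0), ?_, ?_⟩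
  · refine Lead.sum _ _ _ _ fun i _ => (ev_lead φ hx _).mul0 ?_
    split_ifs with h
    · subst h; simpa using Lead.one
    · exact (lead_tt_pow i).of_lt (by exact_mod_cast Nat.pos_of_ne_zero h)
  · rw [Polynomial.eval₂_eq_sum_range' (n := M + (Q.natDegree + 1)) _ (by omega),
      Finset.sum_range_add, Finset.mul_sum]
    congr 1
    refine Finset.sum_congr rfl fun i _ => ?_
    rw [pow_add]; ring

/-- `B(x,t)` as polynomial in `t` evaluated at `x`. -/
def Bev (N : ℕ) (b : ℕ → Polynomial A) (x : HahnSeries ℚ L) : HahnSeries ℚ L :=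
  ∑ j ∈ Finset.range N, ev φ x (b j) * tt L ^ j

lemma main_approx {x : HahnSeries ℚ L} {a : L} (hx : Lead x 0 a)
    {n' : ℕ} (p : ℕ → Polynomial A) (hdeg : ∀ i, (p i).natDegree ≤ n')
    (N n : ℕ) (b : ℕ → Polynomial A) (hb : ∀ j, N ≤ j → b j = 0) (α δ : Polynomial A)
    (h : ∀ i ≤ N, α * p i = PowerSeries.coeff (R := Polynomial A) i ((PowerSeries.mk b) ^ n) +
      (if i = N then δ else 0)) :
    ∃ R, Lead R (N : ℚ) 0 ∧ ev φ x α * Ev φ n' p x =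
      Bev φ N b x ^ n + ev φ x δ * tt L ^ N + R := by
  set Bt : Polynomial (Polynomial A) := ∑ j ∈ Finset.range N, C (b j) * X ^ j with hBt
  have h1 : PowerSeries.mk b = (Bt : PowerSeries (Polynomial A)) := by
    ext1 j
    rw [Polynomial.coeff_coe, hBt, Polynomial.finsetSum_coeff]
    simp only [PowerSeries.coeff_mk, Polynomial.coeff_C_mul_X_pow]
    rw [Finset.sum_ite_eq]
    split_ifs with hj
    · rfl
    · exact hb j (by simpa using hj)
  have h2 : Bt.eval₂ (ev φ x) (tt L) = Bev φ N b x := by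
    simp [hBt, Bev, Polynomial.eval₂_finsetSum]
  obtain ⟨R, c, hR, hE⟩ := eval₂_expand φ hx (Bt ^ n) (N + 1)
  rw [Polynomial.eval₂_pow, h2] at hE
  obtain ⟨c', hc'⟩ := Ev_lead φ hx n' (fun i => p (i + (N + 1)))
  refine ⟨tt L ^ (N + 1) * (ev φ x α * Ev φ n' (fun i => p (i + (N + 1))) x - R), ?_, ?_⟩
  · have := (lead_tt_pow (L := L) (N+1)).mul0 (((ev_lead φ hx α).mul0 hc').sub hR)
    exact this.of_lt (by push_cast; linarith)
  · rw [hE, Ev_expand φ x (N + 1) p hdeg, mul_add, Finset.mul_sum]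
    have h3 : ∑ i ∈ Finset.range (N + 1), ev φ x α * (ev φ x (p i) * tt L ^ i) =
        ∑ i ∈ Finset.range (N + 1), ev φ x ((Bt ^ n).coeff i) * tt L ^ i +
          ev φ x δ * tt L ^ N := by
      have h4 : ∀ i ∈ Finset.range (N + 1), ev φ x α * (ev φ x (p i) * tt L ^ i) =
          ev φ x ((Bt ^ n).coeff i) * tt L ^ i +
            (if i = N then ev φ x δ * tt L ^ N else 0) := by
        intro i hi
        have := h i (by simp at hi; omega)
        rw [h1, ← Polynomial.coe_pow, Polynomial.coeff_coe] at this
        rw [← mul_assoc, ← map_mul, this]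
        split_ifs with hiN
        · subst hiN; rw [map_add]; ring
        · simp
      rw [Finset.sum_congr rfl h4, Finset.sum_add_distrib]
      simp
    rw [h3]; ring

lemma Bev_sub {x y : HahnSeries ℚ L} {a : L} (hx : Lead x 0 a) (hy : Lead y 0 a)
    (N : ℕ) (hN : 1 ≤ N) (b : ℕ → Polynomial A) :
    ∃ V, Bev φ N b x - Bev φ N b y = (x - y) * V ∧
      Lead V 0 (((derivative (b 0)).map φ).eval a) := by
  choose V hV hV' using fun j => ev_sub φ hx hy (b j)
  refine ⟨∑ j ∈ Finset.range N, V j * tt L ^ j, ?_, ?_⟩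
  · simp only [Bev]
    rw [← Finset.sum_sub_distrib, Finset.mul_sum]
    refine Finset.sum_congr rfl fun j _ => ?_
    rw [← mul_assoc, ← hV]; ring
  · have : Lead (∑ j ∈ Finset.range N, V j * tt L ^ j) 0 (∑ j ∈ Finset.range N,
      (((derivative (b j)).map φ).eval a * (if j = 0 then 1 else 0))) := by
      refine Lead.sum _ _ _ _ fun i _ => (hV' i).mul0 ?_
      split_ifs with h
      · subst h; simpa using Lead.one
      · exact (lead_tt_pow i).of_lt (by exact_mod_cast Nat.pos_of_ne_zero h)
    convert this using 1
    simp
    intro h; omega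

end EvalCalc

lemma local_roots {A L : Type*} [CommRing A] [Field L] [CharZero L] (φ : A →+* L)
    {n' : ℕ} (p : ℕ → Polynomial A) (hdeg : ∀ i, (p i).natDegree ≤ n')
    (N n : ℕ) (hN : 1 ≤ N) (hn : 0 < n)
    (b : ℕ → Polynomial A) (hb : ∀ j, N ≤ j → b j = 0) (α δ : Polynomial A)
    (h : ∀ i ≤ N, α * p i = PowerSeries.coeff (R := Polynomial A) i ((PowerSeries.mk b) ^ n) +
      (if i = N then δ else 0))
    (a u E : L) (hu : ((derivative (b 0)).map φ).eval a = u) (hu0 : u ≠ 0)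
    (hδ : (δ.map φ).eval a ≠ 0)
    (s : Fin n → HahnSeries ℚ L) (hs : ∀ i, Lead (s i) 0 a)
    (other : HahnSeries ℚ L → HahnSeries ℚ L)
    (hother : ∀ x, Lead x 0 a → Lead (other x) 0 E)
    (hE : (α.map φ).eval a * E = u ^ n)
    (hF : ∀ x, Ev φ n' p x = other x * ∏ i, (x - s i)) :
    ∃ w : Fin n → L, (∀ i j, Lead (s i - s j) ((N : ℚ) / n) ((w i - w j) / u)) ∧
      ∏ i, (X - C (w i)) = X ^ n + C ((δ.map φ).eval a) := by
  have hw : ∀ i, ∃ w, Lead (Bev φ N b (s i)) ((N : ℚ) / n) w := by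
    intro i
    obtain ⟨R, hR, hE⟩ := main_approx φ (hs i) p hdeg N n b hb α δ h
    have h0 : Ev φ n' p (s i) = 0 := by
      rw [hF, Finset.prod_eq_zero (Finset.mem_univ i) (sub_self _), mul_zero]
    rw [h0, mul_zero] at hE
    have h1 : Bev φ N b (s i) ^ n = -(tt L ^ N * ev φ (s i) δ + R) := by
      linear_combination -hE
    have h2 := (((lead_tt_pow (L := L) N).mul0 (ev_lead φ (hs i) δ)).add hR).neg
    rw [← h1] at h2
    obtain ⟨w, hw, -⟩ := lead_root hn h2 (by simpa using hδ)
    exact ⟨w, hw⟩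
  choose w hw using hw
  have hdiff : ∀ i j, Lead (s i - s j) ((N : ℚ) / n) ((w i - w j) / u) := by
    intro i j
    obtain ⟨V, hV, hV'⟩ := Bev_sub φ (hs i) (hs j) N hN b
    rw [hu] at hV'
    have := (hw i).sub (hw j)
    rw [hV] at this
    exact lead_div hV' hu0 this
  refine ⟨w, hdiff, ?_⟩
  apply Polynomial.funext
  intro z
  let i0 : Fin n := ⟨0, hn⟩
  set y : L := (z - w i0) / u with hy
  set T : HahnSeries ℚ L := HahnSeries.single ((N : ℚ) / n) y with hT
  have hTl : Lead T ((N : ℚ) / n) y := Lead.single _ _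
  have hq : (0 : ℚ) < (N : ℚ) / n := by positivity
  have hxl : Lead (s i0 + T) 0 a := by simpa using (hs i0).add (hTl.of_lt hq)
  have hnq : (n : ℚ) * ((N : ℚ) / n) = N := by field_simp
  obtain ⟨R, hR, hEq⟩ := main_approx φ hxl p hdeg N n b hb α δ h
  obtain ⟨V, hV, hV'⟩ := Bev_sub φ hxl (hs i0) N hN b
  rw [hu] at hV'
  have hB : Lead (Bev φ N b (s i0 + T)) ((N : ℚ) / n) z := by
    have e : Bev φ N b (s i0 + T) = Bev φ N b (s i0) + T * V := by
      linear_combination hV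
    rw [e]
    convert (hw i0).add (hTl.mul0 hV') using 1
    rw [hy]; field_simp; ring
  have hRHS := ((hB.pow n).add (hnq.symm ▸ (lead_tt_pow (L := L) N).mul0 (ev_lead φ hxl δ))).add
    (hnq.symm ▸ hR)
  have hprod : Lead (∏ i, (s i0 + T - s i)) (n * ((N : ℚ) / n)) (∏ i, ((z - w i) / u)) := by
    have := Lead.prod Finset.univ (fun i => s i0 + T - s i) (fun _ => (N : ℚ) / n)
      (fun i => (z - w i) / u) (fun i _ => by
        convert (hdiff i0 i).add hTl using 1
        · ring
        · rw [hy]; field_simp; ring)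
    simpa using this
  have hLHS := hprod.mul0 ((ev_lead φ hxl α).mul0 (hother _ hxl))
  have e2 : (∏ i, (s i0 + T - s i)) * (ev φ (s i0 + T) α * other (s i0 + T)) =
      Bev φ N b (s i0 + T) ^ n + tt L ^ N * ev φ (s i0 + T) δ + R := by
    rw [mul_comm (tt L ^ N), ← hEq, hF]; ring
  rw [e2] at hLHS
  have := hLHS.uniq hRHS
  rw [hE, Finset.prod_div_distrib] at this
  simp only [Finset.prod_const, Finset.card_univ, Fintype.card_fin] at this
  rw [div_mul_cancel₀ _ (pow_ne_zero _ hu0)] at this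
  simp only [Polynomial.eval_prod, Polynomial.eval_sub, Polynomial.eval_X, Polynomial.eval_C,
    Polynomial.eval_add, Polynomial.eval_pow]
  rw [this]; ring

/-- sign relating ordered and unordered products of differences -/
def epsn (n : ℕ) : ℤ := ∏ i : Fin n, ∏ _j ∈ Finset.Ioi i, (-1)

lemma epsn_sq (n : ℕ) : epsn n * epsn n = 1 := by
  simp [epsn, ← Finset.prod_mul_distrib, ← mul_pow]

lemma epsn_ne (n : ℕ) : epsn n ≠ 0 := by
  simp [epsn, Finset.prod_eq_zero_iff]

lemma prod_lt_sq {R : Type*} [CommRing R] {n : ℕ} (v : Fin n → R) :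
    ∏ i, ∏ j ∈ univ.erase i, (v i - v j) =
    (epsn n : R) *
      ∏ q ∈ Finset.univ.filter (fun q : Fin n × Fin n => q.1 < q.2), (v q.1 - v q.2) ^ 2 := by
  have h := Finset.prod_prod_Ioi_mul_eq_prod_prod_off_diag (fun i j : Fin n => v j - v i)
  have h2 : ∏ q ∈ Finset.univ.filter (fun q : Fin n × Fin n => q.1 < q.2), (v q.1 - v q.2) ^ 2 =
      ∏ i, ∏ j ∈ Finset.Ioi i, (v i - v j) ^ 2 := by
    rw [Finset.prod_filter, ← Finset.univ_product_univ, Finset.prod_product]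
    refine Finset.prod_congr rfl fun i _ => ?_
    rw [← Finset.prod_filter]
    refine Finset.prod_congr ?_ fun _ _ => rfl
    ext j; simp
  simp only [Finset.compl_singleton] at h
  rw [← h, h2, epsn]
  push_cast
  rw [← Finset.prod_mul_distrib]
  refine Finset.prod_congr rfl fun i _ => ?_
  rw [← Finset.prod_mul_distrib]
  refine Finset.prod_congr rfl fun j _ => ?_
  ring

lemma eval_derivative_prod_root {L : Type*} [Field L] {n : ℕ} (v : Fin n → L) (i : Fin n) :
    (derivative (∏ i, (X - C (v i)))).eval (v i) = ∏ j ∈ univ.erase i, (v i - v j) := by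
  rw [← Finset.mul_prod_erase univ _ (Finset.mem_univ i), derivative_mul]
  simp [Polynomial.eval_prod]

lemma disc_lemma (L : Type*) [Field L] (n : ℕ) (hn : 0 < n) : ∃ z : ℤ, z ≠ 0 ∧
    ∀ (v : Fin n → L) (e : L), ∏ i, (X - C (v i)) = X ^ n + C e →
    ∏ q ∈ Finset.univ.filter (fun q : Fin n × Fin n => q.1 < q.2), (v q.1 - v q.2) ^ 2 =
      z * e ^ (n - 1) := by
  refine ⟨epsn n * n ^ n * ((-1) ^ n) ^ (n - 1), ?_, ?_⟩
  · have := epsn_ne n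
    have h2 : (n : ℤ) ≠ 0 := by exact_mod_cast hn.ne'
    have h3 : ((-1 : ℤ)) ≠ 0 := by norm_num
    positivity
  · intro v e h
    have h1 := prod_lt_sq v
    have h2 : ∀ i, ∏ j ∈ univ.erase i, (v i - v j) = n * v i ^ (n - 1) := by
      intro i
      rw [← eval_derivative_prod_root, h]
      simp [Polynomial.derivative_X_pow]
    have h3 : e = (-1) ^ n * ∏ i, v i := by
      have := congrArg (Polynomial.eval 0) h
      simp [Polynomial.eval_prod, hn.ne', Finset.prod_neg] at this
      rw [← this]
    have h4 : ∏ i, v i = (-1) ^ n * e := by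
      rw [h3, ← mul_assoc, ← mul_pow]; simp
    simp only [h2] at h1
    rw [Finset.prod_mul_distrib, Finset.prod_pow, h4] at h1
    simp at h1
    have h5 : (epsn n : L) * epsn n = 1 := by exact_mod_cast congrArg (Int.cast : ℤ → L) (epsn_sq n)
    push_cast
    calc _ = (epsn n : L) * (epsn n * ∏ q ∈ Finset.univ.filter
          (fun q : Fin n × Fin n => q.1 < q.2), (v q.1 - v q.2) ^ 2) := by
            rw [← mul_assoc, h5, one_mul]
      _ = _ := by rw [← h1, mul_pow]; ring

lemma gdlim_eq {A L : Type*} [CommRing A] [IsDomain A] [Field L] [CharZero L]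
    (φ : A →+* L)
    (n' : ℕ) (p : ℕ → Polynomial A) (hdeg : ∀ i, (p i).natDegree ≤ n')
    (m : ℕ) (d nn : Fin m → ℕ) (hnn : ∀ ν, 0 < nn ν)
    (a : (ν : Fin m) → Fin (d ν) → L)
    (ha : Function.Injective fun q : Σ ν, Fin (d ν) => a q.1 q.2)
    (fp : Fin m → Polynomial A) (hfmonic : ∀ ν, (fp ν).Monic)
    (hffac : ∀ ν, (fp ν).map φ = ∏ ℓ, (X - C (a ν ℓ)))
    (hF0 : p 0 = ∏ ν, fp ν ^ nn ν)
    (s : (ν : Fin m) → (ℓ : Fin (d ν)) → Fin (nn ν) → HahnSeries ℚ L)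
    (hs : ∀ ν ℓ i, HasConst (s ν ℓ i) (a ν ℓ))
    (hsplit : (fam n' p).map (Phi φ) = ∏ ν, ∏ ℓ, ∏ i, (X - C (s ν ℓ i)))
    (ν : Fin m) (α δ : Polynomial A) (β : ℕ → Polynomial A) (N : ℕ)
    (hZd : 1 < nn ν →
      1 ≤ N ∧
      (∀ ℓ, ((α * δ).map φ).eval (a ν ℓ) ≠ 0) ∧
      ∀ i ≤ N, α * p i =
        PowerSeries.coeff (R := Polynomial A) i
          ((PowerSeries.mk fun j =>
            if j = 0 then fp ν * β 0 else if j < N then β j else 0) ^ nn ν) +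
          (if i = N then δ else 0)) :
    ∃ z : ℤ, z ≠ 0 ∧ ∀ ℓ, gdlim d nn a s ν ℓ =
      z * ((δ.map φ).eval (a ν ℓ)) ^ (nn ν - 1) *
        (∏ ν' ∈ univ.erase ν, (∏ ℓ', (a ν ℓ - a ν' ℓ')) ^ nn ν') ^ (nn ν - 1) /
        ((α.map φ).eval (a ν ℓ)) ^ (nn ν - 1) := by
  have hs' : ∀ ν ℓ i, Lead (s ν ℓ i) 0 (a ν ℓ) := fun ν ℓ i => hs ν ℓ i
  rcases (Nat.succ_le_of_lt (hnn ν)).eq_or_lt with h1 | h1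
  · refine ⟨1, one_ne_zero, fun ℓ => ?_⟩
    have h1' : nn ν = 1 := h1.symm
    have hemp : Finset.univ.filter (fun q : Fin (nn ν) × Fin (nn ν) => q.1 < q.2) = ∅ := by
      ext ⟨i, j⟩
      simp only [mem_filter, mem_univ, true_and, notMem_empty, iff_false, not_lt]
      rw [Fin.le_def]; omega
    rw [gdlim, hemp]
    simp only [h1', Finset.prod_empty]
    simp
    exact Lead.one.lim0_eq one_ne_zero
  obtain ⟨hN, hne, hZ⟩ := hZd h1
  have hn0 := hnn ν
  obtain ⟨z, hz, hdisc⟩ := disc_lemma L (nn ν) hn0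
  refine ⟨z, hz, ?_⟩
  -- abbreviations
  have hαne : ∀ ℓ, (α.map φ).eval (a ν ℓ) ≠ 0 := fun ℓ => by
    have := hne ℓ
    rw [Polynomial.map_mul, Polynomial.eval_mul] at this
    exact left_ne_zero_of_mul this
  have hδne : ∀ ℓ, (δ.map φ).eval (a ν ℓ) ≠ 0 := fun ℓ => by
    have := hne ℓ
    rw [Polynomial.map_mul, Polynomial.eval_mul] at this
    exact right_ne_zero_of_mul this
  obtain ⟨G, hG⟩ : ∃ G : Fin (d ν) → L, ∀ ℓ, G ℓ =
    ∏ ν' ∈ univ.erase ν, (∏ ℓ', (a ν ℓ - a ν' ℓ')) ^ nn ν' := ⟨_, fun _ => rfl⟩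
  obtain ⟨D, hD⟩ : ∃ D : Fin (d ν) → L, ∀ ℓ, D ℓ =
    ∏ ℓ' ∈ univ.erase ℓ, (a ν ℓ - a ν ℓ') := ⟨_, fun _ => rfl⟩
  obtain ⟨B, hB⟩ : ∃ B : Fin (d ν) → L, ∀ ℓ, B ℓ = ((β 0).map φ).eval (a ν ℓ) :=
    ⟨_, fun _ => rfl⟩
  have hGne : ∀ ℓ, G ℓ ≠ 0 := by
    intro ℓ
    rw [hG]
    refine Finset.prod_ne_zero_iff.2 fun ν' hν' => pow_ne_zero _ ?_
    refine Finset.prod_ne_zero_iff.2 fun ℓ' _ => sub_ne_zero.2 fun h => ?_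
    have := @ha ⟨ν, ℓ⟩ ⟨ν', ℓ'⟩ h
    simp only [Sigma.mk.injEq] at this
    exact (Finset.mem_erase.1 hν').1 this.1.symm
  have hDne : ∀ ℓ, D ℓ ≠ 0 := by
    intro ℓ
    rw [hD]
    refine Finset.prod_ne_zero_iff.2 fun ℓ' hℓ' => sub_ne_zero.2 fun h => ?_
    have := @ha ⟨ν, ℓ⟩ ⟨ν, ℓ'⟩ h
    simp only [Sigma.mk.injEq, heq_eq_eq, true_and] at this
    exact (Finset.mem_erase.1 hℓ').1 this.symm
  -- relation β₀^n = α G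
  have hBG : ∀ ℓ, (α.map φ).eval (a ν ℓ) * G ℓ = B ℓ ^ nn ν := by
    have h0 := hZ 0 (Nat.zero_le _)
    rw [if_neg (by omega), add_zero, PowerSeries.coeff_zero_eq_constantCoeff_apply, map_pow,
      ← PowerSeries.coeff_zero_eq_constantCoeff_apply, PowerSeries.coeff_mk, if_pos rfl, hF0,
      ← Finset.mul_prod_erase univ _ (Finset.mem_univ ν), mul_pow] at h0
    have h2 : α * ∏ x ∈ univ.erase ν, fp x ^ nn x = β 0 ^ nn ν := by
      apply mul_left_cancel₀ (pow_ne_zero (nn ν) (hfmonic ν).ne_zero)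
      rw [← h0]; ring
    intro ℓ
    have h3 := congrArg (fun P => (P.map φ).eval (a ν ℓ)) h2
    simp only [Polynomial.map_mul, Polynomial.map_pow, Polynomial.eval_mul, Polynomial.eval_pow,
      Polynomial.map_prod, Polynomial.eval_prod, hffac, Polynomial.eval_sub, Polynomial.eval_X,
      Polynomial.eval_C] at h3
    rw [hG, hB, h3]
  have hBne : ∀ ℓ, B ℓ ≠ 0 := by
    intro ℓ h
    have := hBG ℓ
    rw [h, zero_pow hn0.ne'] at this
    exact mul_ne_zero (hαne ℓ) (hGne ℓ) this
  -- the local analysis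
  have hloc : ∀ ℓ, ∃ w : Fin (nn ν) → L, (∀ i j, Lead (s ν ℓ i - s ν ℓ j) ((N : ℚ) / nn ν)
      ((w i - w j) / (D ℓ * B ℓ))) ∧
      ∏ i, (X - C (w i)) = X ^ nn ν + C ((δ.map φ).eval (a ν ℓ)) := by
    intro ℓ
    refine local_roots φ p hdeg N (nn ν) hN hn0 _ ?_ α δ hZ (a ν ℓ) (D ℓ * B ℓ)
      (G ℓ * D ℓ ^ nn ν) ?_ (mul_ne_zero (hDne ℓ) (hBne ℓ)) (hδne ℓ) (s ν ℓ) (hs' ν ℓ)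
      (fun x => (∏ ν' ∈ univ.erase ν, ∏ ℓ', ∏ i', (x - s ν' ℓ' i')) *
        ∏ ℓ' ∈ univ.erase ℓ, ∏ i, (x - s ν ℓ' i)) ?_ ?_ ?_
    · intro j hj
      rw [if_neg (by omega), if_neg (by omega)]
    · simp only [if_true, derivative_mul, Polynomial.map_add, Polynomial.map_mul,
        Polynomial.eval_add, Polynomial.eval_mul]
      rw [← Polynomial.derivative_map, hffac, eval_derivative_prod_root, ← hD, ← hB,
        Polynomial.eval_prod, Finset.prod_eq_zero (Finset.mem_univ ℓ) (by simp)]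
      ring
    · intro x hx
      refine Lead.mul0 ?_ ?_
      · have : Lead (∏ ν' ∈ univ.erase ν, ∏ ℓ', ∏ i', (x - s ν' ℓ' i')) 0
          (∏ ν' ∈ univ.erase ν, ∏ ℓ', ∏ i' : Fin (nn ν'), (a ν ℓ - a ν' ℓ')) := by
          refine Lead.prod0 _ _ _ fun ν' _ => Lead.prod0 _ _ _ fun ℓ' _ => Lead.prod0 _ _ _
            fun i _ => hx.sub (hs' _ _ _)
        simpa [hG, Finset.prod_pow] using this
      · have : Lead (∏ ℓ' ∈ univ.erase ℓ, ∏ i, (x - s ν ℓ' i)) 0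
          (∏ ℓ' ∈ univ.erase ℓ, ∏ i : Fin (nn ν), (a ν ℓ - a ν ℓ')) := by
          refine Lead.prod0 _ _ _ fun ℓ' _ => Lead.prod0 _ _ _
            fun i _ => hx.sub (hs' _ _ _)
        simpa [hD, Finset.prod_pow] using this
    · rw [mul_pow, ← hBG]; ring
    · intro x
      rw [Ev, hsplit]
      simp only [Polynomial.eval_prod, Polynomial.eval_sub, Polynomial.eval_X, Polynomial.eval_C]
      rw [← Finset.mul_prod_erase univ _ (Finset.mem_univ ν),
        ← Finset.mul_prod_erase univ (fun ℓ' => ∏ i, (x - s ν ℓ' i)) (Finset.mem_univ ℓ)]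
      ring
  choose w hw hwp using hloc
  intro ℓ
  -- differences of products
  have hdiff : ∀ q : Fin (nn ν) × Fin (nn ν),
      Lead ((∏ ℓ', (HahnSeries.C (a ν ℓ) - s ν ℓ' q.2)) -
        ∏ ℓ', (HahnSeries.C (a ν ℓ) - s ν ℓ' q.1)) ((N : ℚ) / nn ν)
        (w ℓ q.1 / B ℓ - w ℓ q.2 / B ℓ) := by
    rintro ⟨i, j⟩
    simp only
    rw [← Finset.mul_prod_erase univ (fun ℓ' => HahnSeries.C (a ν ℓ) - s ν ℓ' j)
      (Finset.mem_univ ℓ), ← Finset.mul_prod_erase univ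
      (fun ℓ' => HahnSeries.C (a ν ℓ) - s ν ℓ' i) (Finset.mem_univ ℓ)]
    have hbase : ∀ ℓ' i, Lead (HahnSeries.C (a ν ℓ) - s ν ℓ' i) 0 (a ν ℓ - a ν ℓ') :=
      fun ℓ' i => (Lead.C _).sub (hs' _ _ _)
    obtain ⟨c, hc⟩ := lead_prod_sub (univ.erase ℓ) (fun ℓ' => HahnSeries.C (a ν ℓ) - s ν ℓ' j)
      (fun ℓ' => HahnSeries.C (a ν ℓ) - s ν ℓ' i) ((N : ℚ) / nn ν)
      (fun ℓ' _ => ⟨_, hbase ℓ' j⟩) (fun ℓ' _ => ⟨_, hbase ℓ' i⟩)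
      (fun ℓ' _ => ⟨_, by
        have := hw ℓ' i j
        convert this using 1
        ring⟩)
    have hP := Lead.prod0 (univ.erase ℓ) (fun ℓ' => HahnSeries.C (a ν ℓ) - s ν ℓ' i) _
      (fun ℓ' _ => hbase ℓ' i)
    rw [← hD] at hP
    convert (hc.mul0 (hbase ℓ j)).add ((hw ℓ i j).mul0 hP) using 1
    · ring
    · have := hDne ℓ
      have := hBne ℓ
      field_simp
      ring
  have hlead : Lead ((∏ ν' ∈ Finset.univ.erase ν, ∏ ℓ', ∏ i',
      (HahnSeries.C (a ν ℓ) - s ν' ℓ' i')) ^ (2 * nn ν - 2)) 0 (G ℓ ^ (2 * nn ν - 2)) := by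
    have : Lead (∏ ν' ∈ univ.erase ν, ∏ ℓ', ∏ i', (HahnSeries.C (a ν ℓ) - s ν' ℓ' i')) 0
          (∏ ν' ∈ univ.erase ν, ∏ ℓ', ∏ i' : Fin (nn ν'), (a ν ℓ - a ν' ℓ')) := by
      refine Lead.prod0 _ _ _ fun ν' _ => Lead.prod0 _ _ _ fun ℓ' _ => Lead.prod0 _ _ _
        fun i _ => (Lead.C _).sub (hs' _ _ _)
    have h2 : Lead (∏ ν' ∈ univ.erase ν, ∏ ℓ', ∏ i', (HahnSeries.C (a ν ℓ) - s ν' ℓ' i')) 0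
          (G ℓ) := by simpa [hG, Finset.prod_pow] using this
    simpa using h2.pow (2 * nn ν - 2)
  have hprod := Lead.prod
    (Finset.univ.filter (fun q : Fin (nn ν) × Fin (nn ν) => q.1 < q.2)) _ _ _
    (fun q _ => (hdiff q).pow 2)
  have hpoly : ∏ i, (X - C (w ℓ i / B ℓ)) =
      X ^ nn ν + C ((δ.map φ).eval (a ν ℓ) / B ℓ ^ nn ν) := by
    apply Polynomial.funext
    intro y
    have h2 := congrArg (Polynomial.eval (B ℓ * y)) (hwp ℓ)
    simp only [Polynomial.eval_prod, Polynomial.eval_sub, Polynomial.eval_X, Polynomial.eval_C,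
      Polynomial.eval_add, Polynomial.eval_pow] at h2 ⊢
    have hb := hBne ℓ
    have h3 : ∀ i, y - w ℓ i / B ℓ = (B ℓ * y - w ℓ i) / B ℓ := fun i => by field_simp
    simp only [h3]
    rw [Finset.prod_div_distrib, h2]
    simp only [Finset.prod_const, Finset.card_univ, Fintype.card_fin]
    field_simp
    rw [mul_pow]
  rw [hdisc _ _ hpoly] at hprod
  have htot := hlead.mul hprod
  rw [gdlim, htot.lim0_eq ?_]
  · rw [← hG, ← hBG, show 2 * nn ν - 2 = (nn ν - 1) + (nn ν - 1) by omega, pow_add, div_pow,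
      mul_pow]
    have := pow_ne_zero (nn ν - 1) (hGne ℓ)
    have := pow_ne_zero (nn ν - 1) (hαne ℓ)
    field_simp
  · have h1 : (z : L) ≠ 0 := by exact_mod_cast hz
    exact mul_ne_zero (pow_ne_zero _ (hGne ℓ)) (mul_ne_zero h1 (pow_ne_zero _
      (div_ne_zero (hδne ℓ) (pow_ne_zero _ (hBne ℓ)))))

lemma res_identity {L : Type*} [Field L] (m : ℕ) (d nn : Fin m → ℕ) (hnn : ∀ ν, 0 < nn ν)
    (a : (ν : Fin m) → Fin (d ν) → L)
    (ha : Function.Injective fun q : Σ ν, Fin (d ν) => a q.1 q.2) :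
    ∃ ε : ℤ, ε ≠ 0 ∧
      (∏ ν, (∏ ν' ∈ univ.erase ν, (∏ ℓ, ∏ ℓ', (a ν ℓ - a ν' ℓ')) ^ nn ν') ^ (nn ν - 1)) *
      (∏ ν, ∏ ν' ∈ Finset.Ioi ν,
      (∏ ℓ, ∏ ℓ', (a ν ℓ - a ν' ℓ')) ^
        (2 * ((nn ν : ℤ) + (nn ν' : ℤ) - (nn ν : ℤ) * (nn ν' : ℤ)))) =
      ε * ∏ ν, ∏ ν' ∈ Finset.univ.erase ν,
            (∏ ℓ, ∏ ℓ', (a ν ℓ - a ν' ℓ')) ^ nn ν' := by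
  obtain ⟨R, hR⟩ : ∃ R : Fin m → Fin m → L, ∀ ν ν', ∏ ℓ, ∏ ℓ', (a ν ℓ - a ν' ℓ') = R ν ν' :=
    ⟨_, fun _ _ => rfl⟩
  have hRne : ∀ ν ν', ν ≠ ν' → R ν ν' ≠ 0 := by
    intro ν ν' hne
    rw [← hR]
    refine Finset.prod_ne_zero_iff.2 fun ℓ _ => Finset.prod_ne_zero_iff.2 fun ℓ' _ =>
      sub_ne_zero.2 fun h => ?_
    have := @ha ⟨ν, ℓ⟩ ⟨ν', ℓ'⟩ h
    simp only [Sigma.mk.injEq] at this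
    exact hne this.1
  have hRs : ∀ ν ν', R ν' ν = ((-1) ^ (d ν * d ν') : L) * R ν ν' := by
    intro ν ν'
    rw [← hR, ← hR, Finset.prod_comm]
    have : ∀ ℓ ℓ', a ν' ℓ' - a ν ℓ = (-1) * (a ν ℓ - a ν' ℓ') := fun _ _ => by ring
    simp only [this, Finset.prod_mul_distrib]
    simp only [Finset.prod_const, Finset.card_univ, Fintype.card_fin, ← pow_mul]
    rw [mul_comm (d ν')]
  simp only [hR]
  refine ⟨∏ ν, ∏ ν' ∈ Finset.Ioi ν, ((-1) ^ (d ν * d ν')) ^ (nn ν * nn ν'), ?_, ?_⟩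
  · simp [Finset.prod_eq_zero_iff]
  have e1 := Finset.prod_prod_Ioi_mul_eq_prod_prod_off_diag
    (fun ν' ν : Fin m => (R ν ν' ^ nn ν') ^ (nn ν - 1))
  have e2 := Finset.prod_prod_Ioi_mul_eq_prod_prod_off_diag
    (fun ν' ν : Fin m => R ν ν' ^ nn ν')
  simp only [Finset.compl_singleton] at e1 e2
  simp only [← Finset.prod_pow]
  rw [← e1, ← e2]
  push_cast
  simp only [← Finset.prod_mul_distrib]
  refine Finset.prod_congr rfl fun ν _ => Finset.prod_congr rfl fun ν' hν' => ?_
  have hlt : ν < ν' := by simpa using hν'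
  have h0 := hRne ν ν' hlt.ne
  rw [hRs ν ν']
  have hη : ((-1) ^ (d ν * d ν') : L) * (-1) ^ (d ν * d ν') = 1 := by
    rw [← mul_pow]; simp
  generalize ((-1) ^ (d ν * d ν') : L) = η at *
  generalize R ν ν' = r at *
  obtain ⟨x, hx⟩ := Nat.exists_eq_succ_of_ne_zero (hnn ν).ne'
  obtain ⟨y, hy⟩ := Nat.exists_eq_succ_of_ne_zero (hnn ν').ne'
  rw [hx, hy]
  have hη2 : ∀ j : ℕ, η ^ (2 * j) = 1 := fun j => by rw [pow_mul, pow_two, hη, one_pow]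
  have hr : (r ^ (x.succ * y.succ) * r ^ (x.succ * y.succ)) *
      r ^ (2 * (((x.succ : ℕ) : ℤ) + ((y.succ : ℕ) : ℤ) - ((x.succ : ℕ) : ℤ) * ((y.succ : ℕ) : ℤ)))
      = (r ^ x.succ * r ^ y.succ) * (r ^ x.succ * r ^ y.succ) := by
    simp only [← zpow_natCast, ← zpow_add₀ h0]
    congr 1
    push_cast; ring
  have hne : r ^ x.succ * r ^ y.succ ≠ 0 := by positivity
  apply mul_right_cancel₀ hne
  have e3 : η ^ (x.succ * y.succ) * η ^ x.succ = (η ^ x.succ) ^ y := by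
    have : η ^ (x.succ * y.succ) * η ^ x.succ = (η ^ x.succ) ^ y * η ^ (2 * x.succ) := by
      simp only [Nat.succ_eq_add_one]; ring
    rw [this, hη2, mul_one]
  simp only [Nat.succ_sub_one, Nat.succ_eq_add_one, Nat.add_sub_cancel] at *
  calc _ = (η ^ (x + 1)) ^ y * ((r ^ ((x+1) * (y+1)) * r ^ ((x+1) * (y+1))) *
      r ^ (2 * (((x + 1 : ℕ) : ℤ) + ((y + 1 : ℕ) : ℤ) - ((x+1 : ℕ) : ℤ) * ((y+1 : ℕ) : ℤ)))) := by
        ring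
    _ = _ := by rw [hr, ← e3]; ring

/-- **Theorem 3.7.**  Suppose `F(x,t)` satisfies `(α_ν, δ_{ν,n(ν)})`-Zd for each
`f_ν = ∏_ℓ (x − a_{νℓ})` with `n_ν > 1`, the `a_{νℓ}` pairwise distinct.  Then there
is a nonzero constant `c ∈ k` with
`ver(F) = c · ∏_ν res(f_ν, δ_ν^{n_ν−1}) · ∏_ν ∏_{ν'≠ν} res(f_ν, f_{ν'})^{n_{ν'}}
  / ∏_ν res(f_ν, α_ν^{n_ν−1})`
(the resultant of the monic split `f_ν` with `h` being `∏_ℓ h(a_{νℓ})`). -/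
theorem stmt8 {k A L : Type*} [Field k] [IsAlgClosed k] [CharZero k]
    [CommRing A] [IsDomain A] [Algebra k A]
    [Field L] [IsAlgClosed L] [CharZero L]
    (φ : A →+* L) (hφ : Function.Injective φ)
    (n' : ℕ) (p : ℕ → Polynomial A) (hdeg : ∀ i, (p i).natDegree ≤ n')
    (m : ℕ) (d nn : Fin m → ℕ) (hd : ∀ ν, 0 < d ν) (hnn : ∀ ν, 0 < nn ν)
    (hn' : n' = ∑ ν, d ν * nn ν)
    (a : (ν : Fin m) → Fin (d ν) → L)
    (ha : Function.Injective fun q : Σ ν, Fin (d ν) => a q.1 q.2)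
    (fp : Fin m → Polynomial A) (hfmonic : ∀ ν, (fp ν).Monic)
    (hffac : ∀ ν, (fp ν).map φ = ∏ ℓ, (X - C (a ν ℓ)))
    (hF0 : p 0 = ∏ ν, fp ν ^ nn ν)
    (s : (ν : Fin m) → (ℓ : Fin (d ν)) → Fin (nn ν) → HahnSeries ℚ L)
    (hs : ∀ ν ℓ i, HasConst (s ν ℓ i) (a ν ℓ))
    (hsplit : (fam n' p).map (Phi φ) = ∏ ν, ∏ ℓ, ∏ i, (X - C (s ν ℓ i)))
    (αp δp : Fin m → Polynomial A) (β : Fin m → ℕ → Polynomial A) (nd : Fin m → ℕ)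
    (hZd : ∀ ν, 1 < nn ν →
      1 ≤ nd ν ∧
      (∀ ℓ, ((αp ν * δp ν).map φ).eval (a ν ℓ) ≠ 0) ∧
      ∀ i ≤ nd ν, αp ν * p i =
        PowerSeries.coeff (R := Polynomial A) i
          ((PowerSeries.mk fun j =>
            if j = 0 then fp ν * β ν 0 else if j < nd ν then β ν j else 0) ^ nn ν) +
          (if i = nd ν then δp ν else 0)) :
    ∃ c : k, c ≠ 0 ∧
      ver d nn a s =
        φ (algebraMap k A c) *
          (∏ ν, ∏ ℓ, (((δp ν).map φ).eval (a ν ℓ)) ^ (nn ν - 1)) *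
          (∏ ν, ∏ ν' ∈ Finset.univ.erase ν,
            (∏ ℓ, ∏ ℓ', (a ν ℓ - a ν' ℓ')) ^ nn ν') /
          (∏ ν, ∏ ℓ, (((αp ν).map φ).eval (a ν ℓ)) ^ (nn ν - 1)) := by
  choose z hz hgd using fun ν => gdlim_eq φ n' p hdeg m d nn hnn a ha fp hfmonic hffac hF0 s hs
    hsplit ν (αp ν) (δp ν) (β ν) (nd ν) (hZd ν)
  obtain ⟨ε, hε, hres⟩ := res_identity m d nn hnn a ha
  refine ⟨((∏ ν, z ν ^ d ν) * ε : ℤ), ?_, ?_⟩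
  · have : (∏ ν, z ν ^ d ν) * ε ≠ 0 :=
      mul_ne_zero (Finset.prod_ne_zero_iff.2 fun ν _ => pow_ne_zero _ (hz ν)) hε
    exact_mod_cast this
  · rw [map_intCast, map_intCast, ver]
    have h1 : ∀ ν, ∏ ℓ, gdlim d nn a s ν ℓ = (z ν : L) ^ d ν *
        (∏ ℓ, (((δp ν).map φ).eval (a ν ℓ)) ^ (nn ν - 1)) *
        (∏ ν' ∈ univ.erase ν, (∏ ℓ, ∏ ℓ', (a ν ℓ - a ν' ℓ')) ^ nn ν') ^ (nn ν - 1) /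
        (∏ ℓ, (((αp ν).map φ).eval (a ν ℓ)) ^ (nn ν - 1)) := by
      intro ν
      simp only [hgd]
      rw [Finset.prod_div_distrib, Finset.prod_mul_distrib, Finset.prod_mul_distrib,
        Finset.prod_pow _ (nn ν - 1) (fun ℓ => ∏ ν' ∈ univ.erase ν,
          (∏ ℓ', (a ν ℓ - a ν' ℓ')) ^ nn ν'), Finset.prod_comm (s := univ) (t := univ.erase ν)]
      simp [Finset.prod_pow]
    simp only [h1]
    rw [Finset.prod_div_distrib, Finset.prod_mul_distrib, Finset.prod_mul_distrib,
      div_mul_eq_mul_div, mul_assoc, hres]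
    push_cast
    congr 1
    ring
end
end

section
/- Let F(x,t) be a family of polynomials with Δ_{A[[t]]}(F) ≠ 0 and F_0 = ∏_ν f_ν^{n_ν}, and suppose F satisfies (α, δ_n)-Zd for a linear factor f_ν = x − a_ν. Then the type of F with respect to f_ν is τ_ν = n; more precisely, any two distinct t-roots of F with constant term a_ν differ by a Puiseux series of order n/n_ν, so m_ν = n/n_ν and τ_ν = ⌊n_ν · (n/n_ν)⌋ = n. -/
open Finset Polynomial

noncomputable section

lemma hasConst_iff {L : Type*} [Field L] (s : HahnSeries ℚ L) (a : L) :
    HasConst s a ↔ 0 < HahnSeries.addVal ℚ L (s - HahnSeries.C a) := by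
  rw [HahnSeries.addVal_apply]
  constructor
  · rintro ⟨h0, hneg⟩
    by_cases h : s - HahnSeries.C a = 0
    · rw [h]; simp
    · rw [← HahnSeries.order_eq_orderTop_of_ne_zero h]
      have hc := HahnSeries.coeff_order_eq_zero.not.mpr h
      norm_cast
      by_contra hle
      apply hc
      generalize (s - HahnSeries.C a).order = o at hle
      rcases lt_or_eq_of_le (not_lt.mp hle) with h1 | h1
      · rw [HahnSeries.coeff_sub, hneg _ h1, HahnSeries.C_apply,
          HahnSeries.coeff_single_of_ne h1.ne, sub_zero]
      · rw [h1, HahnSeries.coeff_sub, h0, HahnSeries.C_apply, HahnSeries.coeff_single_same, sub_self]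
  · intro h
    have key : ∀ q ≤ (0 : ℚ), (s - HahnSeries.C a).coeff q = 0 := by
      intro q hq
      apply HahnSeries.coeff_eq_zero_of_lt_orderTop
      refine lt_of_le_of_lt ?_ h
      exact_mod_cast hq
    constructor
    · have := key 0 le_rfl
      rw [HahnSeries.coeff_sub, HahnSeries.C_apply, HahnSeries.coeff_single_same] at this
      exact sub_eq_zero.mp this
    · intro q hq
      have := key q hq.le
      rw [HahnSeries.coeff_sub, HahnSeries.C_apply, HahnSeries.coeff_single_of_ne hq.ne, sub_zero] at this
      exact this

lemma hasConst_C {L : Type*} [Field L] (a : L) : HasConst (HahnSeries.C a) a := by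
  rw [hasConst_iff]; simp

lemma HasConst.nonneg {L : Type*} [Field L] {s : HahnSeries ℚ L} {a : L} (h : HasConst s a) :
    0 ≤ HahnSeries.addVal ℚ L s := by
  rw [HahnSeries.addVal_apply]
  by_cases hs : s = 0
  · rw [hs]; simp
  rw [← HahnSeries.order_eq_orderTop_of_ne_zero hs]
  norm_cast
  by_contra hlt
  exact HahnSeries.coeff_order_eq_zero.not.mpr hs (h.2 _ (not_le.mp hlt))

lemma HasConst.val_eq {L : Type*} [Field L] {s : HahnSeries ℚ L} {a : L} (h : HasConst s a)
    (ha : a ≠ 0) : HahnSeries.addVal ℚ L s = 0 := by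
  refine le_antisymm ?_ h.nonneg
  rw [HahnSeries.addVal_apply]
  by_contra hlt
  exact ha (h.1 ▸ HahnSeries.coeff_eq_zero_of_lt_orderTop (not_le.mp hlt))

lemma hasConst_of_nonneg {L : Type*} [Field L] {s : HahnSeries ℚ L}
    (h : 0 ≤ HahnSeries.addVal ℚ L s) : HasConst s (s.coeff 0) := by
  refine ⟨rfl, fun q hq => ?_⟩
  rw [HahnSeries.addVal_apply] at h
  apply HahnSeries.coeff_eq_zero_of_lt_orderTop
  refine lt_of_lt_of_le ?_ h
  exact_mod_cast hq

lemma HasConst.add {L : Type*} [Field L] {s r : HahnSeries ℚ L} {a b : L} (h : HasConst s a)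
    (h' : HasConst r b) : HasConst (s + r) (a + b) := by
  refine ⟨by rw [HahnSeries.coeff_add, h.1, h'.1], fun q hq => ?_⟩
  rw [HahnSeries.coeff_add, h.2 q hq, h'.2 q hq, add_zero]

lemma HasConst.sub {L : Type*} [Field L] {s r : HahnSeries ℚ L} {a b : L} (h : HasConst s a)
    (h' : HasConst r b) : HasConst (s - r) (a - b) := by
  refine ⟨by rw [HahnSeries.coeff_sub, h.1, h'.1], fun q hq => ?_⟩
  rw [HahnSeries.coeff_sub, h.2 q hq, h'.2 q hq, sub_zero]

lemma HasConst.mul {L : Type*} [Field L] {s r : HahnSeries ℚ L} {a b : L} (h : HasConst s a)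
    (h' : HasConst r b) : HasConst (s * r) (a * b) := by
  have e : s * r - HahnSeries.C (a * b) =
      (s - HahnSeries.C a) * r + HahnSeries.C a * (r - HahnSeries.C b) := by
    rw [map_mul]; ring
  have h0 := (hasConst_C a).nonneg
  have h1 := h'.nonneg
  rw [hasConst_iff] at *
  rw [e]
  refine lt_of_lt_of_le ?_ (AddValuation.map_add _ _ _)
  rw [AddValuation.map_mul, AddValuation.map_mul]
  exact lt_min (lt_of_lt_of_le h (le_add_of_nonneg_right h1))
    (lt_of_lt_of_le h' (le_add_of_nonneg_left h0))

lemma hasConst_Phi {A L : Type*} [CommRing A] [Field L] (φ : A →+* L) (c : PowerSeries A) :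
    HasConst (Phi φ c) (φ (PowerSeries.constantCoeff c)) := by
  constructor
  · have := HahnSeries.ofPowerSeries_apply_coeff (Γ := ℚ) (PowerSeries.map φ c) 0
    simp at this
    simpa [Phi] using this
  · intro q hq
    simp only [Phi, RingHom.comp_apply, HahnSeries.ofPowerSeries_apply]
    apply HahnSeries.embDomain_notin_range
    rintro ⟨n, hn⟩
    simp at hn
    have : (0 : ℚ) ≤ n := Nat.cast_nonneg n
    linarith

/-- evaluation at a series with constant term -/
lemma hasConst_eval {A L : Type*} [CommRing A] [Field L] (φ : A →+* L) (a₀ : A)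
    {s : HahnSeries ℚ L} (hs : HasConst s (φ a₀)) (P : Polynomial (PowerSeries A)) :
    HasConst (P.eval₂ (Phi φ) s) (φ ((P.map PowerSeries.constantCoeff).eval a₀)) := by
  induction P using Polynomial.induction_on with
  | C a => simpa using hasConst_Phi φ a
  | add p q hp hq => simpa using hp.add hq
  | monomial n a ih =>
    have := ih.mul hs
    simpa [pow_succ, mul_assoc, Polynomial.eval₂_mul, Polynomial.eval₂_pow] using this

lemma hasConst_diff {A L : Type*} [CommRing A] [Field L] (φ : A →+* L) (a₀ : A)
    {s r : HahnSeries ℚ L} (hs : HasConst s (φ a₀)) (hr : HasConst r (φ a₀))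
    (P : Polynomial (PowerSeries A)) :
    ∃ Q, P.eval₂ (Phi φ) s - P.eval₂ (Phi φ) r = (s - r) * Q ∧
      HasConst Q (φ ((derivative (P.map PowerSeries.constantCoeff)).eval a₀)) := by
  induction P using Polynomial.induction_on with
  | C a => exact ⟨0, by simp, by simpa using hasConst_C (0 : L)⟩
  | add p q hp hq =>
    obtain ⟨Q, h1, h2⟩ := hp
    obtain ⟨Q', h1', h2'⟩ := hq
    refine ⟨Q + Q', ?_, by simpa using h2.add h2'⟩
    rw [Polynomial.eval₂_add, Polynomial.eval₂_add]
    linear_combination h1 + h1'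
  | monomial n a ih =>
    obtain ⟨Q, h1, h2⟩ := ih
    have e := hasConst_eval φ a₀ hs (Polynomial.C a * X ^ n)
    have e2 : (Polynomial.C a * X ^ (n + 1) : Polynomial (PowerSeries A)) =
      (Polynomial.C a * X ^ n) * X := by ring
    rw [e2]
    generalize (Polynomial.C a * X ^ n : Polynomial (PowerSeries A)) = P at *
    refine ⟨P.eval₂ (Phi φ) s + Q * r, ?_, ?_⟩
    · rw [Polynomial.eval₂_mul_X, Polynomial.eval₂_mul_X]
      linear_combination r * h1
    · have := e.add (h2.mul hr)
      rw [← map_mul, ← map_add] at this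
      convert this using 2
      simp [Polynomial.derivative_mul]
      ring

def psi (A : Type*) [CommRing A] : Polynomial (PowerSeries A) →+* PowerSeries (Polynomial A) :=
  Polynomial.eval₂RingHom (PowerSeries.map Polynomial.C) (PowerSeries.C X)

lemma coeff_psi {A : Type*} [CommRing A] (P : Polynomial (PowerSeries A)) (i j : ℕ) :
    (PowerSeries.coeff i (psi A P)).coeff j = PowerSeries.coeff i (P.coeff j) := by
  induction P using Polynomial.induction_on' with
  | add p q hp hq => simp [hp, hq]
  | monomial n a =>
    simp only [psi, coe_eval₂RingHom, eval₂_monomial]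
    rw [← map_pow, PowerSeries.coeff_mul_C]
    simp only [PowerSeries.coeff_map, coeff_C_mul, coeff_X_pow, coeff_monomial]
    by_cases h : j = n
    · simp [h]
    · simp [h, Ne.symm h]

lemma psi_ext {A : Type*} [CommRing A] (P : Polynomial (PowerSeries A)) (n : ℕ)
    (h : ∀ i < n, PowerSeries.coeff i (psi A P) = 0) :
    Polynomial.C (PowerSeries.X ^ n) ∣ P := by
  rw [Polynomial.C_dvd_iff_dvd_coeff]
  intro j
  rw [PowerSeries.X_pow_dvd_iff]
  intro i hi
  rw [← coeff_psi, h i hi, coeff_zero]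

lemma psi_fam {A : Type*} [CommRing A] (n' : ℕ) (p : ℕ → Polynomial A)
    (hdeg : ∀ i, (p i).natDegree ≤ n') : psi A (fam n' p) = PowerSeries.mk p := by
  ext i j
  rw [coeff_psi, PowerSeries.coeff_mk, fam]
  simp only [finset_sum_coeff, coeff_C_mul, coeff_X_pow, mul_ite, mul_one, mul_zero]
  rw [Finset.sum_ite_eq]
  split_ifs with h
  · simp
  · rw [map_zero, Polynomial.coeff_eq_zero_of_natDegree_lt]
    have := hdeg i
    simp at h
    omega

lemma psi_map {A : Type*} [CommRing A] (a : Polynomial A) :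
    psi A (a.map PowerSeries.C) = PowerSeries.C a := by
  ext i j
  rw [coeff_psi, coeff_map, PowerSeries.coeff_C, PowerSeries.coeff_C]
  split_ifs <;> simp

lemma psi_CX {A : Type*} [CommRing A] :
    psi A (Polynomial.C PowerSeries.X) = PowerSeries.X := by
  simp [psi]

/-- the decomposition inside `A[[t]][x]` -/
lemma decomp {A : Type*} [CommRing A] (n' N : ℕ) (a₀ : A)
    (p : ℕ → Polynomial A) (hdeg : ∀ i, (p i).natDegree ≤ n')
    (α δp : Polynomial A) (β : ℕ → Polynomial A) (nd : ℕ) (hnd : 1 ≤ nd)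
    (hZd : ∀ i ≤ nd, α * p i =
      PowerSeries.coeff (R := Polynomial A) i
        ((PowerSeries.mk fun j =>
          if j = 0 then (X - C a₀) * β 0 else if j < nd then β j else 0) ^ N) +
        (if i = nd then δp else 0)) :
    ∃ B R : Polynomial (PowerSeries A),
      α.map PowerSeries.C * fam n' p = B ^ N + Polynomial.C (PowerSeries.X ^ nd) * R ∧
      B.map PowerSeries.constantCoeff = (X - C a₀) * β 0 ∧
      R.map PowerSeries.constantCoeff = δp := by
  set b : ℕ → Polynomial A := fun j =>
          if j = 0 then (X - C a₀) * β 0 else if j < nd then β j else 0 with hb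
  set B : Polynomial (PowerSeries A) :=
    ∑ j ∈ Finset.range nd, (b j).map PowerSeries.C * Polynomial.C (PowerSeries.X ^ j) with hB
  have hpsiB : psi A B = PowerSeries.mk b := by
    rw [hB, map_sum]
    simp only [map_mul, map_pow, psi_map, psi_CX]
    ext1 i
    simp only [map_sum, PowerSeries.coeff_C_mul, PowerSeries.coeff_X_pow, PowerSeries.coeff_mk,
      mul_ite, mul_one, mul_zero]
    rw [Finset.sum_ite_eq]
    split_ifs with h
    · rfl
    · simp at h
      simp only [hb]
      rw [if_neg (by omega), if_neg (by omega)]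
  obtain ⟨R', hR'⟩ := psi_ext (α.map PowerSeries.C * fam n' p - B ^ N -
      Polynomial.C (PowerSeries.X ^ nd) * δp.map PowerSeries.C) (nd + 1) (by
    intro i hi
    simp only [map_sub, map_mul, map_pow, psi_map, psi_CX, hpsiB, psi_fam n' p hdeg]
    rw [PowerSeries.coeff_C_mul, PowerSeries.coeff_mk, hZd i (by omega),
      PowerSeries.coeff_mul_C, PowerSeries.coeff_X_pow]
    split_ifs <;> simp)
  refine ⟨B, δp.map PowerSeries.C + Polynomial.C PowerSeries.X * R', ?_, ?_, ?_⟩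
  · rw [pow_succ, map_mul] at hR'
    linear_combination hR'
  · have hc : (PowerSeries.constantCoeff).comp (PowerSeries.C (R := A)) = RingHom.id A := by
      ext; simp
    rw [hB, Polynomial.map_sum, Finset.sum_eq_single 0]
    · simp only [Polynomial.map_mul, Polynomial.map_map, hc, Polynomial.map_id, pow_zero, map_one,
        Polynomial.map_one, mul_one]
      simp [hb]
    · intro j _ hj
      simp [hj]
    · intro h; simp at h; omega
  · have hc : (PowerSeries.constantCoeff).comp (PowerSeries.C (R := A)) = RingHom.id A := by
      ext; simp
    simp [Polynomial.map_map, hc]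

lemma beta_ne {A L : Type*} [CommRing A] [IsDomain A] [Field L]
    (φ : A →+* L) (N : ℕ) (a₀ : A)
    (mg : ℕ) (g : Fin mg → Polynomial A) (Mg dg : Fin mg → ℕ)
    (rg : (j : Fin mg) → Fin (dg j) → L)
    (hgfac : ∀ j, (g j).map φ = ∏ ℓ, (X - C (rg j ℓ)))
    (hrg : ∀ j ℓ, rg j ℓ ≠ φ a₀) (p0 α β0 : Polynomial A) (hN : N ≠ 0)
    (hF0 : p0 = (X - C a₀) ^ N * ∏ j, g j ^ Mg j) (hα : α.eval a₀ ≠ 0)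
    (h : α * p0 = ((X - C a₀) * β0) ^ N) : β0.eval a₀ ≠ 0 := by
  intro h0
  have h1 : α * ∏ j, g j ^ Mg j = β0 ^ N := by
    apply mul_left_cancel₀ (pow_ne_zero N (X_sub_C_ne_zero a₀))
    rw [← mul_pow, ← h, hF0]; ring
  have h2 := congrArg (Polynomial.eval a₀) h1
  rw [eval_pow, h0, zero_pow hN, eval_mul, eval_prod] at h2
  rcases mul_eq_zero.mp h2 with h3 | h3
  · exact hα h3
  · obtain ⟨j, -, hj⟩ := Finset.prod_eq_zero_iff.mp h3
    rw [eval_pow] at hj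
    have hj := eq_zero_of_pow_eq_zero hj
    have h4 : ((g j).map φ).eval (φ a₀) = 0 := by
      rw [Polynomial.eval_map, Polynomial.eval₂_at_apply, hj, map_zero]
    rw [hgfac, eval_prod] at h4
    obtain ⟨l, -, hl⟩ := Finset.prod_eq_zero_iff.mp h4
    simp at hl
    exact hrg j l (sub_eq_zero.mp hl).symm

lemma hasConst_pow_diff {L : Type*} [Field L] (c : L) (N : ℕ)
    {y z : HahnSeries ℚ L} (hy : HasConst y c) (hz : HasConst z c) :
    ∃ Q, y ^ N - z ^ N = (y - z) * Q ∧ HasConst Q (N * c ^ (N - 1)) := by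
  obtain ⟨Q, h1, h2⟩ := hasConst_diff (RingHom.id L) c hy hz (X ^ N)
  refine ⟨Q, by simpa [Polynomial.eval₂_pow] using h1, ?_⟩
  simpa [Polynomial.derivative_X_pow] using h2

lemma Phi_X_pow {A L : Type*} [CommRing A] [Field L] (φ : A →+* L) (n : ℕ) :
    Phi φ (PowerSeries.X ^ n) = HahnSeries.single (n : ℚ) 1 := by
  simp [Phi, HahnSeries.ofPowerSeries_X_pow]

/-- the core valuation argument -/
lemma core {L : Type*} [Field L] [CharZero L] (N nd : ℕ) (hN : 1 < N) (hnd : 1 ≤ nd)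
    {s r us ur Rs Rr Q Q' : HahnSeries ℚ L} {d b e : L} (hd : d ≠ 0) (hb : b ≠ 0) (hsr : s ≠ r)
    (hRs : HasConst Rs d) (hRr : HasConst Rr d)
    (hus : us ^ N + HahnSeries.single (nd : ℚ) 1 * Rs = 0)
    (hur : ur ^ N + HahnSeries.single (nd : ℚ) 1 * Rr = 0)
    (hu : us - ur = (s - r) * Q) (hQ : HasConst Q b)
    (hR : Rs - Rr = (s - r) * Q') (hQ' : HasConst Q' e) :
    (s - r).order = (nd : ℚ) / N := by
  have hN0 : (N : ℚ) ≠ 0 := by positivity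
  set m : ℚ := (nd : ℚ) / N with hm
  have hmpos : 0 < m := by positivity
  set T : HahnSeries ℚ L := HahnSeries.single m 1 with hT
  set T' : HahnSeries ℚ L := HahnSeries.single (-m) 1 with hT'
  have hTT' : T * T' = 1 := by
    rw [hT, hT', HahnSeries.single_mul_single]; simp
  have hTN : T ^ N = HahnSeries.single (nd : ℚ) 1 := by
    rw [hT, HahnSeries.single_pow, one_pow, nsmul_eq_mul, hm, mul_div_cancel₀ _ hN0]
  have hTval : HahnSeries.addVal ℚ L T = (m : WithTop ℚ) := by
    rw [HahnSeries.addVal_apply, hT, HahnSeries.orderTop_single one_ne_zero]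
  have aux : ∀ u R : HahnSeries ℚ L, HasConst R d →
      u ^ N + HahnSeries.single (nd : ℚ) 1 * R = 0 →
      ∃ y c, u = T * y ∧ y ^ N = - R ∧ HasConst y c ∧ c ≠ 0 := by
    intro u R hR h
    have e1 : u = T * (T' * u) := by rw [← mul_assoc, hTT', one_mul]
    have e2 : (T' * u) ^ N = - R := by
      have : (T * T') ^ N = 1 := by rw [hTT', one_pow]
      rw [mul_pow] at this
      rw [← hTN] at h
      rw [mul_pow]
      linear_combination T' ^ N * h - R * this
    have e3 : HahnSeries.addVal ℚ L (T' * u) = 0 := by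
      have h1 : HahnSeries.addVal ℚ L ((T' * u) ^ N) = 0 := by
        rw [e2, AddValuation.map_neg, hR.val_eq hd]
      rw [AddValuation.map_pow] at h1
      generalize HahnSeries.addVal ℚ L (T' * u) = x at h1
      induction x using WithTop.recTopCoe with
      | top =>
        obtain ⟨k, rfl⟩ : ∃ k, N = k + 1 := ⟨N - 1, by omega⟩
        rw [succ_nsmul] at h1
        simp at h1
      | coe x =>
        have h1 : ((N • x : ℚ) : WithTop ℚ) = ((0 : ℚ) : WithTop ℚ) := by
          rw [WithTop.coe_nsmul]; exact h1
        have h1 := WithTop.coe_injective h1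
        rw [nsmul_eq_mul] at h1
        rcases mul_eq_zero.mp h1 with h | h
        · exact absurd h hN0
        · rw [h]; rfl
    have e4 := hasConst_of_nonneg e3.ge
    refine ⟨T' * u, _, e1, e2, e4, ?_⟩
    intro h0
    rw [h0, hasConst_iff] at e4
    simp only [map_zero, sub_zero] at e4
    exact absurd e3 e4.ne'
  obtain ⟨y, c, hy1, hy2, hy3, hc⟩ := aux us Rs hRs hus
  obtain ⟨z, c', hz1, hz2, hz3, hc'⟩ := aux ur Rr hRr hur
  have hsr0 : s - r ≠ 0 := sub_ne_zero.mpr hsr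
  have hval : HahnSeries.addVal ℚ L (s - r) = (m : WithTop ℚ) + HahnSeries.addVal ℚ L (y - z) := by
    have : T * (y - z) = (s - r) * Q := by rw [← hu, hy1, hz1]; ring
    have := congrArg (HahnSeries.addVal ℚ L) this
    rw [AddValuation.map_mul, AddValuation.map_mul, hQ.val_eq hb, hTval, add_zero] at this
    exact this.symm
  by_cases hcc : c = c'
  · exfalso
    subst hcc
    obtain ⟨P, hP1, hP2⟩ := hasConst_pow_diff c N hy3 hz3
    have hPv := hP2.val_eq (mul_ne_zero (by exact_mod_cast (by omega : N ≠ 0)) (pow_ne_zero _ hc))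
    have h1 : (y - z) * P = - ((s - r) * Q') := by
      rw [← hP1, hy2, hz2, ← hR]; ring
    have h2 := congrArg (HahnSeries.addVal ℚ L) h1
    rw [AddValuation.map_neg, AddValuation.map_mul, AddValuation.map_mul, hPv, add_zero] at h2
    have h3 := hQ'.nonneg
    have h4 : HahnSeries.addVal ℚ L (s - r) = ((s - r).order : WithTop ℚ) := by
      rw [HahnSeries.addVal_apply, HahnSeries.order_eq_orderTop_of_ne_zero hsr0]
    have h5 : HahnSeries.addVal ℚ L (s - r) ≤ HahnSeries.addVal ℚ L (y - z) := by
      rw [h2]; exact le_add_of_nonneg_right h3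
    rw [h4] at h5 hval
    generalize HahnSeries.addVal ℚ L (y - z) = x at h5 hval
    induction x using WithTop.recTopCoe with
    | top => simp at hval
    | coe x =>
      rw [← WithTop.coe_add] at hval
      have hval := WithTop.coe_injective hval
      have h5 := WithTop.coe_le_coe.mp h5
      linarith
  · have h1 := (hy3.sub hz3).val_eq (sub_ne_zero.mpr hcc)
    rw [h1, add_zero, HahnSeries.addVal_apply,
      ← HahnSeries.order_eq_orderTop_of_ne_zero hsr0] at hval
    exact WithTop.coe_injective hval

/-- **Proposition 4.6.**  Suppose the family `F(x,t)`, with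
`F_0 = (x − a₀)^N · ∏_j g_j^{M_j}` and `Δ_{A[[t]]}(F) ≠ 0`, satisfies `(α, δ)`-Zd for
the linear factor `f_ν = x − a₀` (of multiplicity `N > 1`), with `nd` the order of the
Zd decomposition.  Then the type of `F` with respect to `f_ν` is `τ_ν = nd`: any two
distinct `t`-roots of `F` with constant term `a₀` differ in order exactly `nd/N`, so
`m_ν = nd/N` and `τ_ν = ⌊N · (nd/N)⌋ = nd`. -/
theorem stmt14 {A L : Type*} [CommRing A] [IsDomain A]
    [Field L] [IsAlgClosed L] [CharZero L]
    (φ : A →+* L) (hφ : Function.Injective φ)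
    (n' N : ℕ) (hN : 1 < N)
    (a₀ : A)
    (mg : ℕ) (g : Fin mg → Polynomial A) (Mg dg : Fin mg → ℕ)
    (hgmonic : ∀ j, (g j).Monic)
    (rg : (j : Fin mg) → Fin (dg j) → L)
    (hgfac : ∀ j, (g j).map φ = ∏ ℓ, (X - C (rg j ℓ)))
    (hrg : ∀ j ℓ, rg j ℓ ≠ φ a₀)
    (hrgInj : Function.Injective fun q : Σ j, Fin (dg j) => rg q.1 q.2)
    (p : ℕ → Polynomial A) (hdeg : ∀ i, (p i).natDegree ≤ n')
    (hF0 : p 0 = (X - C a₀) ^ N * ∏ j, g j ^ Mg j)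
    (s : Fin N → HahnSeries ℚ L) (hs : ∀ i, HasConst (s i) (φ a₀))
    (w : (j : Fin mg) → Fin (dg j) → Fin (Mg j) → HahnSeries ℚ L)
    (hw : ∀ j ℓ i, HasConst (w j ℓ i) (rg j ℓ))
    (hsplit : (fam n' p).map (Phi φ) =
      (∏ i, (X - C (s i))) * ∏ j, ∏ ℓ, ∏ i, (X - C (w j ℓ i)))
    (hΔ : rootsSep (Sum.elim s fun q : Σ j : Fin mg, Fin (dg j) × Fin (Mg j) =>
        w q.1 q.2.1 q.2.2) ≠ 0)
    (α δp : Polynomial A) (β : ℕ → Polynomial A) (nd : ℕ) (hnd : 1 ≤ nd)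
    (hcop : (α * δp).eval a₀ ≠ 0)
    (hZd : ∀ i ≤ nd, α * p i =
      PowerSeries.coeff (R := Polynomial A) i
        ((PowerSeries.mk fun j =>
          if j = 0 then (X - C a₀) * β 0 else if j < nd then β j else 0) ^ N) +
        (if i = nd then δp else 0)) :
    (∀ i j, i ≠ j → (s i - s j).order = (nd : ℚ) / (N : ℚ)) ∧
      ⌊(N : ℚ) * ((nd : ℚ) / (N : ℚ))⌋ = (nd : ℤ) := by
  have hN0 : (N : ℚ) ≠ 0 := by positivity
  refine ⟨?_, by rw [mul_div_cancel₀ _ hN0]; exact_mod_cast Int.floor_natCast nd⟩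
  intro i j hij
  rw [eval_mul] at hcop
  have hα := left_ne_zero_of_mul hcop
  have hδ := right_ne_zero_of_mul hcop
  have hβ : (β 0).eval a₀ ≠ 0 := by
    refine beta_ne φ N a₀ mg g Mg dg rg hgfac hrg (p 0) α (β 0) (by omega) hF0 hα ?_
    have := hZd 0 (by omega)
    rw [if_neg (by omega), add_zero, PowerSeries.coeff_zero_eq_constantCoeff_apply, map_pow] at this
    rw [this]
    simp [← PowerSeries.coeff_zero_eq_constantCoeff_apply]
  obtain ⟨B, R, hBR, hB, hR⟩ := decomp n' N a₀ p hdeg α δp β nd hnd hZd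
  have hsij : s i ≠ s j := by
    intro h
    apply hΔ
    rw [rootsSep]
    apply Finset.prod_eq_zero (i := (Sum.inl i, Sum.inl j))
    · simp [hij]
    · simp [h]
  have hroot : ∀ k, (B.eval₂ (Phi φ) (s k)) ^ N +
      HahnSeries.single (nd : ℚ) 1 * R.eval₂ (Phi φ) (s k) = 0 := by
    intro k
    have h0 : (fam n' p).eval₂ (Phi φ) (s k) = 0 := by
      rw [← Polynomial.eval_map, hsplit, eval_mul, eval_prod,
        Finset.prod_eq_zero (Finset.mem_univ k), zero_mul]
      simp
    have := congrArg (Polynomial.eval₂ (Phi φ) (s k)) hBR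
    rw [Polynomial.eval₂_mul, h0, mul_zero, Polynomial.eval₂_add, Polynomial.eval₂_pow,
      Polynomial.eval₂_mul, Polynomial.eval₂_C, Phi_X_pow] at this
    exact this.symm
  obtain ⟨Q, hQ1, hQ2⟩ := hasConst_diff φ a₀ (hs i) (hs j) B
  obtain ⟨Q', hQ1', hQ2'⟩ := hasConst_diff φ a₀ (hs i) (hs j) R
  have hRi := hasConst_eval φ a₀ (hs i) R
  have hRj := hasConst_eval φ a₀ (hs j) R
  rw [hR] at hRi hRj
  rw [hB] at hQ2
  refine core N nd hN hnd ?_ ?_ hsij hRi hRj (hroot i) (hroot j) hQ1 hQ2 hQ1' hQ2'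
  · rwa [Ne, map_eq_zero_iff φ hφ]
  · rw [Ne, map_eq_zero_iff φ hφ]
    simpa using hβ
end
end
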